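/- arXiv:1901.09839 — 3 statements merged into one kernel-verified Lean document; each statement's English description precedes it below -/
import Mathlib

section
/- Let n ≥ 2, let X be an n×p real matrix with columns x₁, …, xₚ, let C = Iₙ − (1/n)𝟙𝟙ᵀ be the centering matrix, and suppose the centered columns C x₁, …, C xₚ span the hyperplane {v ∈ ℝⁿ : Σᵢ vᵢ = 0}. If f₁, f₂ ∈ ℝⁿ satisfy cov(xⱼ, f₁) = cov(xⱼ, f₂) for every j = 1, …, p, then there exists a constant c ∈ ℝ such that f₁ = f₂ + c·𝟙. (Converse direction of the paper's Claim: under a spanning condition, two functions producing identical covariance effect size analogues differ by a constant shift.) -/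
open Finset Matrix

/-- Sample covariance of two vectors in ℝⁿ:
`cov(x, f) = (1/(n−1)) Σᵢ (xᵢ − x̄)(fᵢ − f̄)`. -/
noncomputable def sampleCov {n : ℕ} (x f : Fin n → ℝ) : ℝ :=
  (1 / ((n : ℝ) - 1)) *
    ∑ i, (x i - (∑ k, x k) / n) * (f i - (∑ k, f k) / n)

/-- The centering matrix `C = Iₙ − (1/n)𝟙𝟙ᵀ`. -/
noncomputable def centeringMatrix (n : ℕ) : Matrix (Fin n) (Fin n) ℝ :=
  1 - ((n : ℝ))⁻¹ • Matrix.of (fun _ _ => (1 : ℝ))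

/-!
Up to the factor `n - 1`, the covariance of `x` and `f` is the dot product `C x ⬝ᵥ f`: the mean of
`f` drops out because `C x` sums to zero. Equal covariances therefore make `f₁ - f₂` orthogonal to
the span of the `C xⱼ`, which is the sum-zero hyperplane. Since `eᵢ - eⱼ` lies in this hyperplane,
all coordinates of `f₁ - f₂` agree.
-/

theorem centeringMatrix_mulVec {n : ℕ} (x : Fin n → ℝ) :
    centeringMatrix n *ᵥ x = Fintype.balance x := by
  ext i
  rw [centeringMatrix, sub_mulVec, one_mulVec, smul_mulVec]
  simp [mulVec, dotProduct, Fintype.balance_apply, Fintype.expect_eq_sum_div_card, div_eq_inv_mul]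

theorem sampleCov_eq_dotProduct {n : ℕ} (x f : Fin n → ℝ) :
    sampleCov x f = 1 / ((n : ℝ) - 1) * (centeringMatrix n *ᵥ x ⬝ᵥ f) := by
  have hx i : x i - (∑ k, x k) / n = Fintype.balance x i := by
    simp [Fintype.balance_apply, Fintype.expect_eq_sum_div_card]
  simp only [sampleCov, centeringMatrix_mulVec, dotProduct, hx, mul_sub, sum_sub_distrib,
    ← sum_mul, Fintype.sum_balance, zero_mul, sub_zero]

theorem sampleCov_eq_sampleCov_iff {n : ℕ} (hn : n ≠ 1) {x f g : Fin n → ℝ} :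
    sampleCov x f = sampleCov x g ↔
      centeringMatrix n *ᵥ x ⬝ᵥ f = centeringMatrix n *ᵥ x ⬝ᵥ g := by
  have hn' : (n : ℝ) - 1 ≠ 0 := sub_ne_zero.mpr (Nat.cast_ne_one.mpr hn)
  rw [sampleCov_eq_dotProduct, sampleCov_eq_dotProduct, mul_right_inj' (one_div_ne_zero hn')]

theorem dotProduct_eq_of_mem_span {ι R : Type*} [Fintype ι] [Semiring R] {s : Set (ι → R)}
    {f g v : ι → R} (h : ∀ u ∈ s, u ⬝ᵥ f = u ⬝ᵥ g) (hv : v ∈ Submodule.span R s) :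
    v ⬝ᵥ f = v ⬝ᵥ g := by
  let dotWith := (dotProductBilin (m := ι) (A := R) R Rᵐᵒᵖ).flip
  exact LinearMap.eqOn_span (f := dotWith f) (g := dotWith g) h hv

theorem exists_eq_add_const_of_dotProduct_eq {ι R : Type*} [Fintype ι] [NonAssocRing R]
    {f g : ι → R} (h : ∀ v : ι → R, ∑ i, v i = 0 → v ⬝ᵥ f = v ⬝ᵥ g) :
    ∃ c, ∀ i, f i = g i + c := by
  classical
  cases isEmpty_or_nonempty ι with
  | inl _ => exact ⟨0, isEmptyElim⟩
  | inr hι =>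
    obtain ⟨j⟩ := hι
    refine ⟨f j - g j, fun i => ?_⟩
    have hij : f i - f j = g i - g j := by
      have hsum : ∑ k, (Pi.single i 1 - Pi.single j 1 : ι → R) k = 0 := by simp
      simpa only [sub_dotProduct, single_one_dotProduct] using h _ hsum
    rw [add_sub_left_comm, ← hij, add_sub_cancel]

theorem eq_add_const_of_sampleCov_eq_general {ι : Type*} {n : ℕ} (hn : 2 ≤ n)
    {x : ι → Fin n → ℝ}
    (hspan : ∀ v : Fin n → ℝ, ∑ i, v i = 0 →
      v ∈ Submodule.span ℝ (Set.range fun j => centeringMatrix n *ᵥ x j))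
    {f₁ f₂ : Fin n → ℝ} (hcov : ∀ j, sampleCov (x j) f₁ = sampleCov (x j) f₂) :
    ∃ c : ℝ, ∀ i, f₁ i = f₂ i + c := by
  have hcol : ∀ u ∈ Set.range fun j => centeringMatrix n *ᵥ x j, u ⬝ᵥ f₁ = u ⬝ᵥ f₂ :=
    Set.forall_mem_range.mpr fun j => (sampleCov_eq_sampleCov_iff (by lia)).mp (hcov j)
  exact exists_eq_add_const_of_dotProduct_eq fun v hv =>
    dotProduct_eq_of_mem_span hcol (hspan v hv)

/-- If the centered columns of `X` span the hyperplane `{v : Σᵢ vᵢ = 0}` and two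
vectors `f₁, f₂` produce identical covariance effect size analogues, then
`f₁ = f₂ + c·𝟙` for some constant `c`. -/
theorem eq_add_const_of_sampleCov_eq (n p : ℕ) (hn : 2 ≤ n)
    (X : Matrix (Fin n) (Fin p) ℝ)
    (hspan : Submodule.span ℝ
        (Set.range fun j : Fin p => (centeringMatrix n).mulVec (fun i => X i j))
      = LinearMap.ker (∑ i : Fin n, (LinearMap.proj i : (Fin n → ℝ) →ₗ[ℝ] ℝ)))
    (f₁ f₂ : Fin n → ℝ)
    (hcov : ∀ j : Fin p, sampleCov (fun i => X i j) f₁ = sampleCov (fun i => X i j) f₂) :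
    ∃ c : ℝ, ∀ i, f₁ i = f₂ i + c := by
  refine eq_add_const_of_sampleCov_eq_general hn (fun v hv => ?_) hcov
  simpa [hspan] using hv
end

section
/- Let μ ∈ ℝᵖ, let Ω be a positive-definite symmetric p×p matrix with inverse Λ = Ω⁻¹, fix an index j, and use the partition notation where ωⱼ = Ωⱼⱼ, ω₋ⱼ is the j-th column of Ω with the j-th entry deleted, Ω₋ⱼ is Ω with the j-th row and column deleted, and λⱼ, λ₋ⱼ, Λ₋ⱼ are defined analogously from Λ; write μ = (μⱼ; μ₋ⱼ) and δⱼ = λ₋ⱼᵀ Λ₋ⱼ⁻¹ λ₋ⱼ. Then for every conditioning value b ∈ ℝ, the Kullback–Leibler divergence between the marginal density φ_{μ₋ⱼ, Ω₋ⱼ} and the conditional density φ_{μ₋ⱼ − Λ₋ⱼ⁻¹λ₋ⱼ(b − μⱼ), Λ₋ⱼ⁻¹} satisfies ∫_{ℝᵖ⁻¹} φ_{μ₋ⱼ,Ω₋ⱼ}(x) · log(φ_{μ₋ⱼ,Ω₋ⱼ}(x) / φ_{μ₋ⱼ−Λ₋ⱼ⁻¹λ₋ⱼ(b−μⱼ),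 Λ₋ⱼ⁻¹}(x)) dx = (1/2)·[tr(Ω₋ⱼΛ₋ⱼ) − log det(Ω₋ⱼΛ₋ⱼ) − (p−1) + δⱼ·(b − μⱼ)²]. (The paper's Equation (8), the closed-form KLD used in RATE; the KLD of the RATE criterion is this quantity at b = 0.) -/
open MeasureTheory Matrix Real

/-- The multivariate Gaussian density with mean `μ` and covariance `S`:
`φ_{μ,S}(x) = (2π)^{−d/2} (det S)^{−1/2} exp(−(1/2)(x−μ)ᵀ S⁻¹ (x−μ))`. -/
noncomputable def mvnPDF {d : Type*} [Fintype d] [DecidableEq d] (μ : d → ℝ)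
    (S : Matrix d d ℝ) (x : d → ℝ) : ℝ :=
  (2 * Real.pi) ^ (-(Fintype.card d : ℝ) / 2) * S.det ^ (-(1 : ℝ) / 2) *
    Real.exp (-(1 / 2) * ((x - μ) ⬝ᵥ S⁻¹.mulVec (x - μ)))

/-!
Write `log (φ_{m,S} / φ_{n,T})` as a constant plus half the difference of the quadratic forms
`(x − n)ᵀ T⁻¹ (x − n)` and `(x − m)ᵀ S⁻¹ (x − m)`. For a random vector `X` with mean `m` and
covariance `S`, `E[(X − a)ᵀ M (X − a)] = tr (M S) + (m − a)ᵀ M (m − a)`, so the first form has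
expectation `tr (T⁻¹ S) + (m − n)ᵀ T⁻¹ (m − n)` and the second has expectation `tr 1`. In the
theorem `T⁻¹ = Λ₋ⱼ` and `m − n = (b − μⱼ) Λ₋ⱼ⁻¹ λ₋ⱼ`.

The moments are known for `multivariateGaussian`, the image of the standard Gaussian under
`z ↦ m + √S z`; changing variables along this affine map shows that its density is `φ_{m,S}`.
-/

open ProbabilityTheory WithLp
open scoped MatrixOrder

section WithDensity

theorem map_withDensity_comp {α β : Type*} [MeasurableSpace α] [MeasurableSpace β]
    {ν : Measure α} {φ : α → β} {g : β → ENNReal} (hφ : Measurable φ) (hg : Measurable g) :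
    (ν.withDensity (g ∘ φ)).map φ = (ν.map φ).withDensity g := by
  ext s hs
  rw [Measure.map_apply hφ hs, withDensity_apply _ (hφ hs), withDensity_apply _ hs,
    setLIntegral_map hs hg hφ]
  rfl

theorem pi_withDensity_ofReal {ι : Type*} [Fintype ι] {α : ι → Type*}
    [∀ i, MeasurableSpace (α i)] {ν : ∀ i, Measure (α i)} [∀ i, SigmaFinite (ν i)]
    {f : ∀ i, α i → ℝ} (hf : ∀ i, Integrable (f i) (ν i)) (hf_nonneg : ∀ i x, 0 ≤ f i x) :
    Measure.pi (fun i => (ν i).withDensity fun x => ENNReal.ofReal (f i x)) =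
      (Measure.pi ν).withDensity fun x => ENNReal.ofReal (∏ i, f i (x i)) := by
  refine Measure.pi_eq fun s hs => ?_
  have hf_on (i : ι) : Integrable (f i) ((ν i).restrict (s i)) := (hf i).restrict
  rw [withDensity_apply _ (.univ_pi hs), Measure.restrict_pi_pi,
    ← ofReal_integral_eq_lintegral_ofReal (.fintype_prod_dep hf_on)
      (ae_of_all _ fun x => Finset.prod_nonneg fun i _ => hf_nonneg i (x i)),
    integral_fintype_prod_eq_prod,
    ENNReal.ofReal_prod_of_nonneg fun i _ => integral_nonneg (hf_nonneg i)]
  refine Finset.prod_congr rfl fun i _ => ?_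
  rw [withDensity_apply _ (hs i),
    ofReal_integral_eq_lintegral_ofReal (hf_on i) (ae_of_all _ (hf_nonneg i))]

end WithDensity

section QuadraticForm

variable {d Ω : Type*} [Fintype d] [MeasurableSpace Ω] {P : Measure Ω} {X : d → Ω → ℝ}

theorem integrable_dotProduct_mulVec (hX : ∀ i, MemLp (X i) 2 P) (M : Matrix d d ℝ) :
    Integrable (fun ω => (X · ω) ⬝ᵥ M *ᵥ (X · ω)) P := by
  simp only [dotProduct, mulVec, Finset.mul_sum]
  refine integrable_finsetSum _ fun i _ => integrable_finsetSum _ fun j _ => ?_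
  exact (hX i).integrable_mul ((hX j).const_mul (M i j))

theorem integral_dotProduct_mulVec [IsProbabilityMeasure P] (hX : ∀ i, MemLp (X i) 2 P)
    (M : Matrix d d ℝ) :
    ∫ ω, (X · ω) ⬝ᵥ M *ᵥ (X · ω) ∂P =
      (M * of fun i j => cov[X i, X j; P]).trace +
        (fun i => P[X i]) ⬝ᵥ M *ᵥ fun i => P[X i] := by
  have hX_mul (i j : d) : Integrable (fun ω => X i ω * (M i j * X j ω)) P :=
    (hX i).integrable_mul ((hX j).const_mul (M i j))
  have second_moment (i j : d) :
      ∫ ω, X i ω * (M i j * X j ω) ∂P = M i j * cov[X j, X i; P] + P[X i] * (M i j * P[X j]) := by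
    have hcov := covariance_eq_sub (hX j) (hX i)
    simp only [Pi.mul_apply] at hcov
    rw [hcov]
    simp_rw [mul_left_comm (X i _), mul_comm (X i _), integral_const_mul]
    ring
  simp only [dotProduct, mulVec, Finset.mul_sum, trace, diag_apply, mul_apply, of_apply,
    ← Finset.sum_add_distrib, ← second_moment]
  rw [integral_finsetSum _ fun i _ => integrable_finsetSum _ fun j _ => hX_mul i j]
  exact Finset.sum_congr rfl fun i _ => integral_finsetSum _ fun j _ => hX_mul i j

end QuadraticForm

section Gaussian

variable {d : Type*} [Fintype d] [DecidableEq d]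

section Density

variable {m : d → ℝ} {S : Matrix d d ℝ}

theorem mvnPDF_pos (hS : 0 < S.det) (x : d → ℝ) : 0 < mvnPDF m S x := by
  unfold mvnPDF
  positivity

theorem log_mvnPDF (hS : 0 < S.det) (x : d → ℝ) :
    log (mvnPDF m S x) = -(Fintype.card d : ℝ) / 2 * log (2 * π) - 1 / 2 * log S.det
      - 1 / 2 * ((x - m) ⬝ᵥ S⁻¹ *ᵥ (x - m)) := by
  rw [mvnPDF, log_mul (by positivity) (by positivity), log_mul (by positivity) (by positivity),
    log_exp, log_rpow (by positivity), log_rpow hS]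
  ring

theorem measurable_mvnPDF (m : d → ℝ) (S : Matrix d d ℝ) : Measurable (mvnPDF m S) := by
  unfold mvnPDF
  fun_prop

theorem mvnPDF_zero_one (z : d → ℝ) : mvnPDF 0 1 z = ∏ i, gaussianPDFReal 0 1 (z i) := by
  have normalization : (2 * π) ^ (-(Fintype.card d : ℝ) / 2) = (√(2 * π))⁻¹ ^ Fintype.card d := by
    rw [sqrt_eq_rpow, ← rpow_neg (by positivity), ← rpow_natCast, ← rpow_mul (by positivity)]
    ring_nf
  simp only [mvnPDF, gaussianPDFReal, Finset.prod_mul_distrib, Finset.prod_const, ← exp_sum,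
    Finset.card_univ, NNReal.coe_one, mul_one, sub_zero, det_one, one_rpow, inv_one, one_mulVec,
    normalization, dotProduct, Finset.mul_sum]
  congr! 3
  ring

theorem mvnPDF_affine {A : Matrix d d ℝ} (hA : A.det ≠ 0) (hS : 0 ≤ S.det) (c z : d → ℝ) :
    mvnPDF (c + A *ᵥ m) (A * S * Aᵀ) (c + A *ᵥ z) = |A.det|⁻¹ * mvnPDF m S z := by
  have det_factor : (A * S * Aᵀ).det ^ (-(1 : ℝ) / 2) = |A.det|⁻¹ * S.det ^ (-(1 : ℝ) / 2) := by
    rw [det_mul, det_mul, det_transpose, mul_right_comm, ← sq, ← sq_abs,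
      mul_rpow (by positivity) hS, neg_div, rpow_neg (by positivity), ← sqrt_eq_rpow,
      sqrt_sq (abs_nonneg _)]
  have precision : Aᵀ * (A * S * Aᵀ)⁻¹ * A = S⁻¹ := by
    rw [Matrix.mul_inv_rev, Matrix.mul_inv_rev, ← Matrix.mul_assoc,
      mul_nonsing_inv _ (by simpa using hA), Matrix.one_mul,
      nonsing_inv_mul_cancel_right _ _ hA.isUnit]
  have quadratic_form : (A *ᵥ (z - m)) ⬝ᵥ (A * S * Aᵀ)⁻¹ *ᵥ (A *ᵥ (z - m)) =
      (z - m) ⬝ᵥ S⁻¹ *ᵥ (z - m) := by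
    rw [← precision, ← mulVec_mulVec, ← mulVec_mulVec, dotProduct_mulVec _ Aᵀ, vecMul_transpose]
  rw [mvnPDF, add_sub_add_left_eq_sub, ← mulVec_sub, quadratic_form, det_factor, mvnPDF]
  ring

theorem map_affine_volume {A : Matrix d d ℝ} (hA : A.det ≠ 0) (c : d → ℝ) :
    volume.map (fun z => c + A *ᵥ z) = ENNReal.ofReal |A.det|⁻¹ • volume := by
  have comp_eq : (fun z => c + A *ᵥ z) = (c + ·) ∘ toLin' A := rfl
  rw [comp_eq, ← Measure.map_map (measurable_const_add c)
    (LinearMap.continuous_of_finiteDimensional _).measurable,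
    map_matrix_volume_pi_eq_smul_volume_pi hA, Measure.map_smul, map_add_left_eq_self, abs_inv]

theorem map_affine_withDensity_mvnPDF {A : Matrix d d ℝ} (hA : A.det ≠ 0) (hS : 0 ≤ S.det)
    (c : d → ℝ) :
    (volume.withDensity fun z => ENNReal.ofReal (mvnPDF m S z)).map (fun z => c + A *ᵥ z) =
      volume.withDensity fun x => ENNReal.ofReal (mvnPDF (c + A *ᵥ m) (A * S * Aᵀ) x) := by
  set g : (d → ℝ) → ENNReal := fun x => ENNReal.ofReal (mvnPDF (c + A *ᵥ m) (A * S * Aᵀ) x)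
  have hg : Measurable g := (measurable_mvnPDF _ _).ennreal_ofReal
  have pullback : (fun z => ENNReal.ofReal (mvnPDF m S z)) =
      ENNReal.ofReal |A.det| • (g ∘ fun z => c + A *ᵥ z) := by
    ext z
    rw [Pi.smul_apply, Function.comp_apply, smul_eq_mul, ← ENNReal.ofReal_mul (abs_nonneg _),
      mvnPDF_affine hA hS, mul_inv_cancel_left₀ (abs_ne_zero.2 hA)]
  rw [pullback, withDensity_smul _ (by fun_prop), Measure.map_smul,
    map_withDensity_comp (by fun_prop) hg, map_affine_volume hA, withDensity_smul_measure,
    smul_smul, ← ENNReal.ofReal_mul (abs_nonneg _), mul_inv_cancel₀ (abs_ne_zero.2 hA),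
    ENNReal.ofReal_one, one_smul]

theorem pi_gaussianReal_eq_withDensity_mvnPDF :
    Measure.pi (fun _ : d => gaussianReal 0 1) =
      volume.withDensity fun z => ENNReal.ofReal (mvnPDF 0 1 z) := by
  simp_rw [mvnPDF_zero_one, gaussianReal_of_var_ne_zero _ one_ne_zero]
  exact pi_withDensity_ofReal (fun _ => integrable_gaussianPDFReal 0 1)
    fun _ => gaussianPDFReal_nonneg 0 1

theorem map_ofLp_multivariateGaussian (hS : S.PosDef) :
    (multivariateGaussian (toLp 2 m) S).map ofLp =
      volume.withDensity fun x => ENNReal.ofReal (mvnPDF m S x) := by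
  have sqrt_mul_transpose : CFC.sqrt S * (CFC.sqrt S)ᵀ = S := by
    have sqrt_symm : (CFC.sqrt S)ᵀ = CFC.sqrt S := by
      simpa [IsHermitian] using (nonneg_iff_posSemidef.1 (CFC.sqrt_nonneg S)).isHermitian
    rw [sqrt_symm, CFC.sqrt_mul_sqrt_self S hS.posSemidef.nonneg]
  have det_sqrt_ne_zero : (CFC.sqrt S).det ≠ 0 := fun h =>
    hS.det_pos.ne' (by rw [← sqrt_mul_transpose, det_mul, h, zero_mul])
  have comp_eq : (ofLp ∘ fun x => toLp 2 m + toEuclideanCLM (𝕜 := ℝ) (CFC.sqrt S) x) ∘ toLp 2 =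
      fun z => m + CFC.sqrt S *ᵥ z := rfl
  rw [multivariateGaussian, ← map_pi_eq_stdGaussian, Measure.map_map (by fun_prop) (by fun_prop),
    Measure.map_map (by fun_prop) (by fun_prop), comp_eq, pi_gaussianReal_eq_withDensity_mvnPDF,
    map_affine_withDensity_mvnPDF det_sqrt_ne_zero (by simp), mulVec_zero, add_zero, Matrix.mul_one,
    sqrt_mul_transpose]

theorem integral_mvnPDF_mul (hS : S.PosDef) (f : (d → ℝ) → ℝ) :
    ∫ x, mvnPDF m S x * f x = ∫ x, f (ofLp x) ∂multivariateGaussian (toLp 2 m) S := by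
  have change_variables := integral_map_equiv (μ := multivariateGaussian (toLp 2 m) S)
    (MeasurableEquiv.toLp 2 (d → ℝ)).symm f
  rw [MeasurableEquiv.coe_toLp_symm, map_ofLp_multivariateGaussian hS,
    integral_withDensity_eq_integral_toReal_smul (measurable_mvnPDF m S).ennreal_ofReal
      (ae_of_all _ fun _ => ENNReal.ofReal_lt_top)] at change_variables
  simpa only [ENNReal.toReal_ofReal (mvnPDF_pos hS.det_pos _).le, smul_eq_mul]
    using change_variables

end Density

section Moments

variable {m : EuclideanSpace ℝ d} {S : Matrix d d ℝ}

theorem memLp_eval_multivariateGaussian (i : d) :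
    MemLp (fun x => x i) 2 (multivariateGaussian m S) :=
  (memLp_piLp_iff (f := id)).1 IsGaussian.memLp_two_id i

theorem integrable_quadraticForm_multivariateGaussian (M : Matrix d d ℝ) (a : d → ℝ) :
    Integrable (fun x => (ofLp x - a) ⬝ᵥ M *ᵥ (ofLp x - a)) (multivariateGaussian m S) :=
  integrable_dotProduct_mulVec
    (fun i => (memLp_eval_multivariateGaussian i).sub (memLp_const (a i))) M

theorem integral_quadraticForm_multivariateGaussian (hS : S.PosSemidef) (M : Matrix d d ℝ)
    (a : d → ℝ) :
    ∫ x, (ofLp x - a) ⬝ᵥ M *ᵥ (ofLp x - a) ∂multivariateGaussian m S =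
      (M * S).trace + (ofLp m - a) ⬝ᵥ M *ᵥ (ofLp m - a) := by
  have integrable_eval (i : d) : Integrable (fun x => x i) (multivariateGaussian m S) :=
    (memLp_eval_multivariateGaussian i).integrable one_le_two
  have mean (i : d) : ∫ x, (x i - a i) ∂multivariateGaussian m S = m i - a i := by
    rw [integral_sub (integrable_eval i) (integrable_const _), integral_const, probReal_univ,
      one_smul, ← eval_integral_piLp (f := fun x => x) integrable_eval i,
      integral_id_multivariateGaussian]
  have cov_eq (i j : d) :
      cov[fun x => x i - a i, fun x => x j - a j; multivariateGaussian m S] = S i j := by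
    rw [covariance_sub_const_left (integrable_eval i), covariance_sub_const_right
      (integrable_eval j), covariance_eval_multivariateGaussian hS]
  have moment := integral_dotProduct_mulVec (P := multivariateGaussian m S)
    (X := fun i x => x i - a i)
    (fun i => (memLp_eval_multivariateGaussian i).sub (memLp_const (a i))) M
  simp_rw [mean, cov_eq] at moment
  exact moment

end Moments

theorem integral_mvnPDF_mul_log_div (m n : d → ℝ) {S T : Matrix d d ℝ} (hS : S.PosDef)
    (hT : T.PosDef) :
    ∫ x, mvnPDF m S x * log (mvnPDF m S x / mvnPDF n T x) =
      1 / 2 * ((T⁻¹ * S).trace - log (S.det / T.det) - Fintype.card d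
        + (m - n) ⬝ᵥ T⁻¹ *ᵥ (m - n)) := by
  have log_ratio (x : d → ℝ) : log (mvnPDF m S x / mvnPDF n T x) =
      1 / 2 * ((x - n) ⬝ᵥ T⁻¹ *ᵥ (x - n) - (x - m) ⬝ᵥ S⁻¹ *ᵥ (x - m) - log (S.det / T.det)) := by
    rw [log_div (mvnPDF_pos hS.det_pos x).ne' (mvnPDF_pos hT.det_pos x).ne',
      log_mvnPDF hS.det_pos, log_mvnPDF hT.det_pos, log_div hS.det_pos.ne' hT.det_pos.ne']
    ring
  have integrable_form := integrable_quadraticForm_multivariateGaussian (m := toLp 2 m) (S := S)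
  rw [integral_mvnPDF_mul hS]
  simp_rw [log_ratio]
  rw [integral_const_mul,
    integral_sub ((integrable_form _ n).sub' (integrable_form _ m)) (integrable_const _),
    integral_sub (integrable_form _ _) (integrable_form _ _),
    integral_quadraticForm_multivariateGaussian hS.posSemidef,
    integral_quadraticForm_multivariateGaussian hS.posSemidef,
    nonsing_inv_mul S hS.det_pos.ne'.isUnit, trace_one, sub_self, zero_dotProduct, integral_const,
    probReal_univ, one_smul]
  ring

theorem kld_rate_closed_form_general (m v : d → ℝ) {S T : Matrix d d ℝ} (hS : S.PosDef)
    (hT : T.PosDef) (t : ℝ) :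
    ∫ x, mvnPDF m S x * log (mvnPDF m S x / mvnPDF (m - t • (T⁻¹ *ᵥ v)) T⁻¹ x) =
      1 / 2 * ((S * T).trace - log (S * T).det - Fintype.card d + (v ⬝ᵥ T⁻¹ *ᵥ v) * t ^ 2) := by
  have hT_unit : IsUnit T.det := hT.det_pos.ne'.isUnit
  have shift_form : (t • (T⁻¹ *ᵥ v)) ⬝ᵥ T *ᵥ (t • (T⁻¹ *ᵥ v)) = (v ⬝ᵥ T⁻¹ *ᵥ v) * t ^ 2 := by
    rw [mulVec_smul, mulVec_mulVec, mul_nonsing_inv T hT_unit, one_mulVec, smul_dotProduct,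
      dotProduct_smul, dotProduct_comm, smul_eq_mul, smul_eq_mul]
    ring
  rw [integral_mvnPDF_mul_log_div m _ hS hT.inv, nonsing_inv_nonsing_inv T hT_unit,
    sub_sub_cancel, shift_form, trace_mul_comm, det_mul, det_nonsing_inv, Ring.inverse_eq_inv',
    div_inv_eq_mul]

end Gaussian

/-- The paper's Equation (8): the closed-form KLD used in RATE. For a Gaussian
vector with mean `μ` and covariance `Ω` (precision `Λ = Ω⁻¹`), the KL divergence
between the marginal density of the coordinates other than `j` and the
conditional density given that the `j`-th coordinate equals `b` is
`(1/2)[tr(Ω₋ⱼΛ₋ⱼ) − log det(Ω₋ⱼΛ₋ⱼ) − (p−1) + δⱼ(b−μⱼ)²]`,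
with `δⱼ = λ₋ⱼᵀ Λ₋ⱼ⁻¹ λ₋ⱼ`. -/
theorem kld_rate_closed_form (p : ℕ) (μ : Fin (p + 1) → ℝ)
    (Ω Λ : Matrix (Fin (p + 1)) (Fin (p + 1)) ℝ)
    (hsymm : Ω.IsSymm) (hΩ : Ω.PosDef) (hΛ : Λ = Ω⁻¹) (j : Fin (p + 1)) (b : ℝ) :
    ∫ x : Fin p → ℝ,
        mvnPDF (μ ∘ j.succAbove) (Ω.submatrix j.succAbove j.succAbove) x *
          Real.log
            (mvnPDF (μ ∘ j.succAbove) (Ω.submatrix j.succAbove j.succAbove) x /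
              mvnPDF
                ((μ ∘ j.succAbove) -
                  (b - μ j) • ((Λ.submatrix j.succAbove j.succAbove)⁻¹.mulVec
                    (fun i => Λ (j.succAbove i) j)))
                (Λ.submatrix j.succAbove j.succAbove)⁻¹ x) =
      (1 / 2) *
        ((Ω.submatrix j.succAbove j.succAbove * Λ.submatrix j.succAbove j.succAbove).trace
          - Real.log (Ω.submatrix j.succAbove j.succAbove *
              Λ.submatrix j.succAbove j.succAbove).det
          - ((Fintype.card (Fin (p + 1)) : ℝ) - 1)
          + ((fun i => Λ (j.succAbove i) j) ⬝ᵥ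
              (Λ.submatrix j.succAbove j.succAbove)⁻¹.mulVec
                (fun i => Λ (j.succAbove i) j)) * (b - μ j) ^ 2) := by
  have hinj := Fin.succAbove_right_injective (p := j)
  have hΛ_pos : Λ.PosDef := hΛ ▸ hΩ.inv
  rw [kld_rate_closed_form_general _ _ (hΩ.submatrix hinj) (hΛ_pos.submatrix hinj)]
  simp
end

section
/- Let Ω be a positive-definite symmetric p×p matrix with inverse Λ = Ω⁻¹, fix an index j, and use the partition notation ωⱼ, ω₋ⱼ, Ω₋ⱼ, λⱼ, λ₋ⱼ, Λ₋ⱼ; write δⱼ = λ₋ⱼᵀ Λ₋ⱼ⁻¹ λ₋ⱼ and fix μⱼ, b ∈ ℝ. Then the closed-form KLD value (1/2)·[tr(Ω₋ⱼΛ₋ⱼ) − log det(Ω₋ⱼΛ₋ⱼ) − (p−1) + δⱼ·(b − μⱼ)²] is nonnegative, and it equals zero for every b if and only if ω₋ⱼ = 0. (The paper's assertion that KLD(β̃ⱼ) is a nonnegative quantity which is zero exactly when removing the effect of variable j has no influence on the other variables.) -/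
open Matrix Real

/-!
For Gaussian effects with covariance `Ω` and precision `Λ = Ω⁻¹`, the conditional law of the block
`u` given the complementary block `v` has precision `Λᵤᵤ`, while its marginal covariance is `Ωᵤᵤ`.
The divergence between the two is a trace/log-determinant gap plus a quadratic form. The gap is
`∑ (x - 1 - log x)` over the eigenvalues of a positive definite matrix similar to `Ωᵤᵤ Λᵤᵤ`, so it
is nonnegative and vanishes only if `Ωᵤᵤ Λᵤᵤ = 1`. Since `Ωᵤᵤ Λᵤᵤ + Ωᵤᵥ Λᵥᵤ = 1`, the latter means
that `Ωᵤᵥ Λᵥᵤ = 0`, which positive definiteness turns into `Ωᵤᵥ = 0`; the mean shift then vanishes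
as well.
-/

section LogDet

open scoped ComplexOrder MatrixOrder

variable {𝕜 m n : Type*} [RCLike 𝕜] [Fintype m]

variable [DecidableEq m] in
lemma exists_isUnit_conjTranspose_mul_self_eq {A : Matrix m m 𝕜} (hA : A.PosDef) :
    ∃ B : Matrix m m 𝕜, IsUnit B ∧ A = Bᴴ * B :=
  CStarAlgebra.isStrictlyPositive_iff_eq_star_mul_self.mp hA.isStrictlyPositive

lemma mul_mul_conjTranspose_same_eq_zero_iff {A : Matrix m m 𝕜} (hA : A.PosDef)
    {C : Matrix n m 𝕜} : C * A * Cᴴ = 0 ↔ C = 0 := by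
  classical
  refine ⟨fun h => ?_, fun h => by simp [h]⟩
  obtain ⟨B, hB, rfl⟩ := exists_isUnit_conjTranspose_mul_self_eq hA
  have hCB : C * Bᴴ = 0 := by
    rw [← self_mul_conjTranspose_eq_zero, conjTranspose_mul, conjTranspose_conjTranspose]
    simpa only [Matrix.mul_assoc] using h
  rw [← mul_nonsing_inv_cancel_right Bᴴ C ((isUnit_iff_isUnit_det _).mp hB.star), hCB,
    Matrix.zero_mul]

variable [DecidableEq m]

lemma eq_one_of_eigenvalues_eq_one {A : Matrix m m 𝕜} (hA : A.IsHermitian)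
    (h : ∀ i, hA.eigenvalues i = 1) : A = 1 := by
  have hdiag : diagonal (RCLike.ofReal ∘ hA.eigenvalues) = (1 : Matrix m m 𝕜) := by
    simp [Function.comp_def, h]
  rw [hA.spectral_theorem, hdiag, map_one]

lemma re_trace_sub_log_re_det_sub_card {A : Matrix m m 𝕜} (hA : A.PosDef) :
    RCLike.re A.trace - log (RCLike.re A.det) - Fintype.card m =
      ∑ i, (hA.isHermitian.eigenvalues i - 1 - log (hA.isHermitian.eigenvalues i)) := by
  rw [hA.isHermitian.trace_eq_sum_eigenvalues, hA.isHermitian.det_eq_prod_eigenvalues,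
    ← RCLike.ofReal_sum, ← RCLike.ofReal_prod, RCLike.ofReal_re, RCLike.ofReal_re,
    log_prod fun i _ => (hA.eigenvalues_pos i).ne']
  simp only [Finset.sum_sub_distrib, Finset.sum_const, Finset.card_univ, nsmul_eq_mul, mul_one]
  ring

lemma re_trace_sub_log_re_det_sub_card_nonneg {A : Matrix m m 𝕜} (hA : A.PosDef) :
    0 ≤ RCLike.re A.trace - log (RCLike.re A.det) - Fintype.card m := by
  rw [re_trace_sub_log_re_det_sub_card hA]
  exact Finset.sum_nonneg fun i _ => sub_nonneg.mpr (log_le_sub_one_of_pos (hA.eigenvalues_pos i))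

lemma re_trace_sub_log_re_det_sub_card_eq_zero_iff {A : Matrix m m 𝕜} (hA : A.PosDef) :
    RCLike.re A.trace - log (RCLike.re A.det) - Fintype.card m = 0 ↔ A = 1 := by
  refine ⟨fun h => eq_one_of_eigenvalues_eq_one hA.isHermitian fun i => ?_,
    fun h => by simp [h]⟩
  rw [re_trace_sub_log_re_det_sub_card hA, Finset.sum_eq_zero_iff_of_nonneg
    fun i _ => sub_nonneg.mpr (log_le_sub_one_of_pos (hA.eigenvalues_pos i))] at h
  by_contra hi
  exact (sub_pos.mpr (log_lt_sub_one_of_pos (hA.eigenvalues_pos i) hi)).ne'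
    (h i (Finset.mem_univ i))

lemma exists_posDef_units_conj_eq_mul {A P : Matrix m m 𝕜} (hA : A.PosDef) (hP : P.PosDef) :
    ∃ (S : Matrix m m 𝕜) (U : (Matrix m m 𝕜)ˣ), S.PosDef ∧ A * P = U * S * U⁻¹ := by
  obtain ⟨B, hB, rfl⟩ := exists_isUnit_conjTranspose_mul_self_eq hA
  obtain ⟨U, hU⟩ : IsUnit Bᴴ := hB.star
  refine ⟨B * P * Bᴴ, U, hP.mul_mul_conjTranspose_same (vecMul_injective_of_isUnit hB), ?_⟩
  rw [Units.eq_mul_inv_iff_mul_eq, hU]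
  simp only [Matrix.mul_assoc]

lemma re_trace_mul_sub_log_re_det_mul_sub_card_nonneg {A P : Matrix m m 𝕜}
    (hA : A.PosDef) (hP : P.PosDef) :
    0 ≤ RCLike.re (A * P).trace - log (RCLike.re (A * P).det) - Fintype.card m := by
  obtain ⟨S, U, hS, hAP⟩ := exists_posDef_units_conj_eq_mul hA hP
  rw [hAP, trace_units_conj, det_units_conj]
  exact re_trace_sub_log_re_det_sub_card_nonneg hS

lemma re_trace_mul_sub_log_re_det_mul_sub_card_eq_zero_iff {A P : Matrix m m 𝕜}
    (hA : A.PosDef) (hP : P.PosDef) :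
    RCLike.re (A * P).trace - log (RCLike.re (A * P).det) - Fintype.card m = 0 ↔ A * P = 1 := by
  obtain ⟨S, U, hS, hAP⟩ := exists_posDef_units_conj_eq_mul hA hP
  rw [hAP, trace_units_conj, det_units_conj, re_trace_sub_log_re_det_sub_card_eq_zero_iff hS,
    Units.mul_inv_eq_one, U.isUnit.mul_eq_left]

end LogDet

section GaussianKLD

variable {m : Type*} [Fintype m] [DecidableEq m]

/-- The closed form of the Kullback–Leibler divergence `D(N(a, S) ‖ N(a - d, P⁻¹))` of Gaussian laws
on `m → ℝ`. The second law is encoded by its precision matrix `P`, which avoids an inverse; `S` and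
`P` are meant to be positive definite. -/
noncomputable def gaussianKLD (S P : Matrix m m ℝ) (d : m → ℝ) : ℝ :=
  1 / 2 * ((S * P).trace - log (S * P).det - Fintype.card m + d ⬝ᵥ P *ᵥ d)

lemma gaussianKLD_nonneg {S P : Matrix m m ℝ} (hS : S.PosDef) (hP : P.PosDef) (d : m → ℝ) :
    0 ≤ gaussianKLD S P d :=
  mul_nonneg (by norm_num) <| add_nonneg
    (re_trace_mul_sub_log_re_det_mul_sub_card_nonneg hS hP)
    (hP.posSemidef.dotProduct_mulVec_nonneg d)

lemma gaussianKLD_eq_zero_iff {S P : Matrix m m ℝ} (hS : S.PosDef) (hP : P.PosDef) {d : m → ℝ} :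
    gaussianKLD S P d = 0 ↔ S * P = 1 ∧ d = 0 := by
  have hgap := re_trace_mul_sub_log_re_det_mul_sub_card_nonneg hS hP
  have hquad : 0 ≤ d ⬝ᵥ P *ᵥ d := hP.posSemidef.dotProduct_mulVec_nonneg d
  have hquad_zero : d ⬝ᵥ P *ᵥ d = 0 ↔ d = 0 := by
    refine ⟨fun h => ?_, fun h => by simp [h]⟩
    by_contra hd
    exact (hP.dotProduct_mulVec_pos hd).ne' h
  rw [← re_trace_mul_sub_log_re_det_mul_sub_card_eq_zero_iff hS hP, ← hquad_zero,
    ← add_eq_zero_iff_of_nonneg hgap hquad]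
  simp [gaussianKLD]

end GaussianKLD

section ComplementaryBlocks

variable {ι m n : Type*} [Fintype ι] [Fintype m]

lemma submatrix_mul_eq_add [Fintype n] {R r c α β : Type*} [NonUnitalNonAssocSemiring R]
    {u : m → ι} {v : n → ι} (huv : Function.Bijective (Sum.elim u v))
    (A : Matrix α ι R) (B : Matrix ι β R) (f : r → α) (g : c → β) :
    (A * B).submatrix f g =
      A.submatrix f u * B.submatrix u g + A.submatrix f v * B.submatrix v g := by
  ext i k
  exact (huv.sum_comp fun l => A (f i) l * B l (g k)).symm.trans (Fintype.sum_sum_type _)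

lemma submatrix_one_eq_zero {R r c α : Type*} [Zero R] [One R] [DecidableEq α]
    {f : r → α} {g : c → α} (hfg : ∀ i k, f i ≠ g k) :
    (1 : Matrix α α R).submatrix f g = 0 :=
  ext fun i k => one_apply_ne (hfg i k)

variable [DecidableEq ι] {u : m → ι} {v : n → ι}

section CommRing

variable {R : Type*} [CommRing R] {Ω : Matrix ι ι R}

lemma submatrix_mul_submatrix_inv_add_eq_one [Fintype n] [DecidableEq m] (hΩ : IsUnit Ω)
    (huv : Function.Bijective (Sum.elim u v)) :
    Ω.submatrix u u * Ω⁻¹.submatrix u u + Ω.submatrix u v * Ω⁻¹.submatrix v u = 1 := by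
  rw [← submatrix_mul_eq_add huv, mul_nonsing_inv _ ((isUnit_iff_isUnit_det Ω).mp hΩ),
    submatrix_one u (huv.injective.comp Sum.inl_injective)]

lemma submatrix_mul_submatrix_inv_add_eq_zero [Fintype n] (hΩ : IsUnit Ω)
    (huv : Function.Bijective (Sum.elim u v)) :
    Ω.submatrix u u * Ω⁻¹.submatrix u v + Ω.submatrix u v * Ω⁻¹.submatrix v v = 0 := by
  rw [← submatrix_mul_eq_add huv, mul_nonsing_inv _ ((isUnit_iff_isUnit_det Ω).mp hΩ)]
  exact submatrix_one_eq_zero fun i k hik => by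
    simpa using huv.injective (a₁ := Sum.inl i) (a₂ := Sum.inr k) hik

lemma submatrix_inv_eq_zero_of_submatrix_eq_zero [DecidableEq m] (hΩ : IsUnit Ω)
    (huv : Function.Bijective (Sum.elim u v)) (hu : IsUnit (Ω.submatrix u u))
    (h : Ω.submatrix u v = 0) : Ω⁻¹.submatrix u v = 0 := by
  have : Fintype n := .ofInjective v (huv.injective.comp Sum.inr_injective)
  have hmul : Ω.submatrix u u * Ω⁻¹.submatrix u v = 0 := by
    simpa [h] using submatrix_mul_submatrix_inv_add_eq_zero hΩ huv
  rw [← nonsing_inv_mul_cancel_left _ (Ω⁻¹.submatrix u v) ((isUnit_iff_isUnit_det _).mp hu), hmul,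
    Matrix.mul_zero]

end CommRing

open scoped ComplexOrder

variable {𝕜 : Type*} [RCLike 𝕜] {Ω : Matrix ι ι 𝕜}

lemma submatrix_mul_submatrix_inv_eq_one_iff [DecidableEq m] (hΩ : Ω.PosDef)
    (huv : Function.Bijective (Sum.elim u v)) :
    Ω.submatrix u u * Ω⁻¹.submatrix u u = 1 ↔ Ω.submatrix u v = 0 := by
  have hv : Function.Injective v := huv.injective.comp Sum.inr_injective
  have : Fintype n := .ofInjective v hv
  have hone := submatrix_mul_submatrix_inv_add_eq_one hΩ.isUnit huv
  refine ⟨fun h => ?_, fun h => by simpa [h] using hone⟩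
  have hcross : Ω⁻¹.submatrix u v * (Ω.submatrix u v)ᴴ = 0 := by
    have hprod : Ω.submatrix u v * Ω⁻¹.submatrix v u = 0 := by simpa [h] using hone
    simpa [conjTranspose_submatrix, hΩ.inv.isHermitian.eq] using congrArg conjTranspose hprod
  have hquad : Ω.submatrix u v * Ω⁻¹.submatrix v v * (Ω.submatrix u v)ᴴ = 0 := by
    simpa only [Matrix.add_mul, Matrix.mul_assoc, hcross, Matrix.mul_zero, Matrix.zero_mul,
      zero_add] using
      congrArg (· * (Ω.submatrix u v)ᴴ) (submatrix_mul_submatrix_inv_add_eq_zero hΩ.isUnit huv)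
  exact (mul_mul_conjTranspose_same_eq_zero_iff (hΩ.inv.submatrix hv)).mp hquad

end ComplementaryBlocks

section ConditioningKLD

variable {ι m n : Type*} [Fintype ι] [DecidableEq ι] [Fintype m] [DecidableEq m] [Fintype n]
  {Ω : Matrix ι ι ℝ} {u : m → ι}

/-- The divergence `D(marginal ‖ conditional)` between the marginal law of the coordinates `u` of a
Gaussian vector with covariance `Ω` and their conditional law when the coordinates `v` deviate by
`x` from their mean; the paper has the single coordinate `v = j` and `x = b - μⱼ`. With `Λ = Ω⁻¹`,
the conditional law has precision `Λᵤᵤ` and mean shifted by `-Λᵤᵤ⁻¹ Λᵤᵥ x`. The maps `u` and `v` are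
meant to enumerate complementary sets of coordinates. -/
noncomputable def conditioningKLD (Ω : Matrix ι ι ℝ) (u : m → ι) (v : n → ι) (x : n → ℝ) : ℝ :=
  gaussianKLD (Ω.submatrix u u) (Ω⁻¹.submatrix u u)
    ((Ω⁻¹.submatrix u u)⁻¹ *ᵥ Ω⁻¹.submatrix u v *ᵥ x)

lemma conditioningKLD_unit (hu : IsUnit (Ω⁻¹.submatrix u u)) (j : ι) (t : ℝ) :
    conditioningKLD Ω u (fun _ : Unit => j) (fun _ => t) =
      1 / 2 * ((Ω.submatrix u u * Ω⁻¹.submatrix u u).trace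
        - log (Ω.submatrix u u * Ω⁻¹.submatrix u u).det - Fintype.card m
        + ((fun i => Ω⁻¹ (u i) j) ⬝ᵥ (Ω⁻¹.submatrix u u)⁻¹ *ᵥ fun i => Ω⁻¹ (u i) j) * t ^ 2) := by
  have hcol : Ω⁻¹.submatrix u (fun _ : Unit => j) *ᵥ (fun _ => t) =
      t • fun i => Ω⁻¹ (u i) j := by
    ext i
    simp [mulVec, dotProduct, mul_comm]
  rw [conditioningKLD, gaussianKLD, hcol, mulVec_mulVec,
    mul_nonsing_inv _ ((isUnit_iff_isUnit_det _).mp hu), one_mulVec, mulVec_smul, smul_dotProduct,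
    dotProduct_smul, dotProduct_comm, smul_smul, smul_eq_mul]
  ring

lemma conditioningKLD_succAbove {p : ℕ} {Ω : Matrix (Fin (p + 1)) (Fin (p + 1)) ℝ}
    (hΩ : Ω.PosDef) (j : Fin (p + 1)) (t : ℝ) :
    conditioningKLD Ω j.succAbove (fun _ : Unit => j) (fun _ => t) =
      1 / 2 * ((Ω.submatrix j.succAbove j.succAbove * Ω⁻¹.submatrix j.succAbove j.succAbove).trace
        - log (Ω.submatrix j.succAbove j.succAbove * Ω⁻¹.submatrix j.succAbove j.succAbove).det
        - (Fintype.card (Fin (p + 1)) - 1)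
        + ((fun i => Ω⁻¹ (j.succAbove i) j) ⬝ᵥ
            (Ω⁻¹.submatrix j.succAbove j.succAbove)⁻¹ *ᵥ fun i => Ω⁻¹ (j.succAbove i) j)
          * t ^ 2) := by
  simp [conditioningKLD_unit (hΩ.inv.submatrix Fin.succAbove_right_injective).isUnit]

end ConditioningKLD

lemma submatrix_unit_eq_zero_iff {R ι κ m : Type*} [Zero R] {A : Matrix ι κ R} {u : m → ι} {j : κ} :
    A.submatrix u (fun _ : Unit => j) = 0 ↔ (fun i => A (u i) j) = 0 := by
  simp [funext_iff, ← Matrix.ext_iff]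

lemma bijective_sumElim_succAbove {p : ℕ} (j : Fin (p + 1)) :
    Function.Bijective (Sum.elim j.succAbove fun _ : Unit => j) := by
  refine ⟨Fin.succAbove_right_injective.sumElim (Function.injective_of_subsingleton _)
    fun i _ => Fin.succAbove_ne j i, fun k => ?_⟩
  rcases Fin.eq_self_or_eq_succAbove j k with rfl | ⟨i, rfl⟩
  exacts [⟨Sum.inr (), rfl⟩, ⟨Sum.inl i, rfl⟩]

theorem kld_nonneg_and_zero_iff_general {ι m n : Type*} [Fintype ι] [DecidableEq ι]
    [Fintype m] [DecidableEq m] [Fintype n]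
    {Ω : Matrix ι ι ℝ} (hΩ : Ω.PosDef) {u : m → ι} {v : n → ι}
    (huv : Function.Bijective (Sum.elim u v)) (x : n → ℝ) :
    0 ≤ conditioningKLD Ω u v x ∧ (conditioningKLD Ω u v x = 0 ↔ Ω.submatrix u v = 0) := by
  have hu : Function.Injective u := huv.injective.comp Sum.inl_injective
  refine ⟨gaussianKLD_nonneg (hΩ.submatrix hu) (hΩ.inv.submatrix hu) _, ?_⟩
  rw [conditioningKLD, gaussianKLD_eq_zero_iff (hΩ.submatrix hu) (hΩ.inv.submatrix hu),
    submatrix_mul_submatrix_inv_eq_one_iff hΩ huv, and_iff_left_iff_imp]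
  intro h
  simp [submatrix_inv_eq_zero_of_submatrix_eq_zero hΩ.isUnit huv (hΩ.submatrix hu).isUnit h]

/-- The closed-form RATE KLD value
`(1/2)[tr(Ω₋ⱼΛ₋ⱼ) − log det(Ω₋ⱼΛ₋ⱼ) − (p−1) + δⱼ(b−μⱼ)²]`, with `Λ = Ω⁻¹` and
`δⱼ = λ₋ⱼᵀ Λ₋ⱼ⁻¹ λ₋ⱼ`, is nonnegative; and it vanishes for every conditioning
value `b` if and only if `ω₋ⱼ = 0`. -/
theorem kld_nonneg_and_zero_iff (p : ℕ)
    (Ω Λ : Matrix (Fin (p + 1)) (Fin (p + 1)) ℝ)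
    (hsymm : Ω.IsSymm) (hΩ : Ω.PosDef) (hΛ : Λ = Ω⁻¹)
    (j : Fin (p + 1)) (μj b : ℝ) :
    0 ≤ (1 / 2) *
        ((Ω.submatrix j.succAbove j.succAbove * Λ.submatrix j.succAbove j.succAbove).trace
          - Real.log (Ω.submatrix j.succAbove j.succAbove *
              Λ.submatrix j.succAbove j.succAbove).det
          - ((Fintype.card (Fin (p + 1)) : ℝ) - 1)
          + ((fun i => Λ (j.succAbove i) j) ⬝ᵥ
              (Λ.submatrix j.succAbove j.succAbove)⁻¹.mulVec
                (fun i => Λ (j.succAbove i) j)) * (b - μj) ^ 2) ∧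
      ((∀ b' : ℝ, (1 / 2) *
          ((Ω.submatrix j.succAbove j.succAbove * Λ.submatrix j.succAbove j.succAbove).trace
            - Real.log (Ω.submatrix j.succAbove j.succAbove *
                Λ.submatrix j.succAbove j.succAbove).det
            - ((Fintype.card (Fin (p + 1)) : ℝ) - 1)
            + ((fun i => Λ (j.succAbove i) j) ⬝ᵥ
                (Λ.submatrix j.succAbove j.succAbove)⁻¹.mulVec
                  (fun i => Λ (j.succAbove i) j)) * (b' - μj) ^ 2) = 0) ↔
        (fun i => Ω (j.succAbove i) j) = (0 : Fin p → ℝ)) := by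
  subst hΛ
  have hkld (c : ℝ) := kld_nonneg_and_zero_iff_general hΩ (bijective_sumElim_succAbove j)
    fun _ => c - μj
  simp only [conditioningKLD_succAbove hΩ, submatrix_unit_eq_zero_iff] at hkld
  exact ⟨(hkld b).1, by simp only [(hkld _).2, forall_const]⟩
end
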